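/- arXiv:1705.04912 — 3 statements merged into one kernel-verified Lean document; each statement's English description precedes it below -/
import Mathlib

section
/- Let α be the sequence α_i = F_{i+1}, let α̃_i = (−1)^i·α_i, and let α̌ and (α̃)̌ denote the binomial transforms of α and α̃ respectively. Then for every n ≥ 0, det P_{(α̃)̌, α̌}(n) = F_{n+2} and det P_{α̌, (α̃)̌}(n) = F_{n+2}. -/
/-- The Fibonacci sequence (as integers): `F 0 = 0`, `F 1 = 1`, `F n = F (n-1) + F (n-2)`. -/
def fibZ : ℕ → ℤ
  | 0 => 0
  | 1 => 1
  | n + 2 => fibZ (n + 1) + fibZ n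

/-- The binomial transform: `α̌_i = Σ_{k=0}^{i} C(i,k) * α_k`. -/
def btrans (α : ℕ → ℤ) (i : ℕ) : ℤ :=
  ∑ k ∈ Finset.range (i + 1), (i.choose k : ℤ) * α k

/-- Entry of the generalized Pascal triangle `P_{α,β}`:
`P (i,0) = α i`, `P (0,j) = β j`, and `P (i,j) = P (i,j-1) + P (i-1,j)` for `i,j ≥ 1`
(consistent when `α 0 = β 0`). -/
def pascalEntry (α β : ℕ → ℤ) : ℕ → ℕ → ℤ
  | i, 0 => α i
  | 0, j + 1 => β (j + 1)
  | i + 1, j + 1 => pascalEntry α β (i + 1) j + pascalEntry α β i (j + 1)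
  termination_by i j => i + j

/-- The generalized Pascal triangle `P_{α,β}(n)` of order `n+1`. -/
def pascalM (α β : ℕ → ℤ) (n : ℕ) : Matrix (Fin (n + 1)) (Fin (n + 1)) ℤ :=
  Matrix.of fun i j => pascalEntry α β (i : ℕ) (j : ℕ)

/-!
If `T` is the Toeplitz matrix with first column `α` and first row `β`, and `L` is the unitriangular
matrix of binomial coefficients, then `P_{α̌, β̌}(n) = L T Lᵀ`, so `P_{α̌, β̌}(n)` and `T` have the
same determinant. For `α̃` and `α`, the diagonals of `T` carry the Fibonacci numbers of all nonzero
integer indices. Because `F_0` is missing, every column of `T` from the third on is the sum of the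
two preceding ones plus a single entry `1`, just above the diagonal; expanding along the last column
again and again leaves a `2 × 2` minor. Exchanging `α̃` and `α` transposes the triangle.
-/

open Matrix

section ColumnRecurrence

variable {R : Type*} [CommRing R] {n : ℕ}

-- Cramer's rule reads the determinant off column `k`, where `M *ᵥ c` contributes `det M * c k = 0`
-- and the basis vector contributes a cofactor.
theorem det_of_col_eq_mulVec_add_single (M : Matrix (Fin (n + 1)) (Fin (n + 1)) R)
    {r k : Fin (n + 1)} {c : Fin (n + 1) → R} {d : R} (hc : c k = 0)
    (h : M.col k = M *ᵥ c + Pi.single r d) :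
    M.det = (-1) ^ (r + k : ℕ) * d * (M.submatrix r.succAbove k.succAbove).det := by
  calc M.det = M.cramer (M.col k) k := by simp [cramer_row_self M (M.col k) k fun _ => rfl]
    _ = d * M.adjugate k r := by
      simp [h, cramer_eq_adjugate_mulVec, mulVec_add, adjugate_mul, hc, smul_mulVec, mul_comm]
    _ = _ := by rw [adjugate_fin_succ_eq_det_submatrix, mul_left_comm, mul_assoc]

theorem det_of_col_recurrence (M : Matrix (Fin (n + 2)) (Fin (n + 2)) R) (a b d : Fin n → R)
    (h : ∀ j, M.col j.succ.succ = a j • M.col j.castSucc.succ + b j • M.col j.castSucc.castSucc +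
      Pi.single j.castSucc.succ (d j)) :
    M.det = (∏ j, -d j) * (M 0 0 * M (Fin.last _) 1 - M 0 1 * M (Fin.last _) 0) := by
  induction n with
  | zero => simp [det_fin_two]
  | succ n ih =>
    set r : Fin (n + 3) := (Fin.last n).castSucc.succ with hr
    set N := M.submatrix r.succAbove Fin.castSucc with hN
    have expand : M.det = -d (Fin.last n) * N.det := by
      have hdet := det_of_col_eq_mulVec_add_single M (k := Fin.last _) (r := r)
        (c := Pi.single (Fin.last n).castSucc.succ (a (Fin.last n)) +
          Pi.single (Fin.last n).castSucc.castSucc (b (Fin.last n))) (d := d (Fin.last n))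
        (by simp [Fin.ext_iff]) (by simpa [mulVec_add] using h (Fin.last n))
      have hsign : (-1 : R) ^ (n + 1 + (n + 2)) = -1 := Odd.neg_one_pow ⟨n + 1, by ring⟩
      simpa [hr, hN, hsign] using hdet
    have succAbove_pivot (j : Fin n) : r.succAbove j.castSucc.succ = j.castSucc.castSucc.succ :=
      Fin.succAbove_of_castSucc_lt _ _ (by simp [hr, Fin.lt_def])
    have minor_recurrence (j : Fin n) : N.col j.succ.succ = a j.castSucc • N.col j.castSucc.succ +
        b j.castSucc • N.col j.castSucc.castSucc + Pi.single j.castSucc.succ (d j.castSucc) := by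
      ext i
      have hi := congrFun (h j.castSucc) (r.succAbove i)
      simpa [hN, Pi.single_apply, ← succAbove_pivot, Fin.succAbove_right_inj] using hi
    have first_row (j : Fin (n + 2)) : N 0 j = M 0 j.castSucc := by simp [hN, hr]
    have last_row (j : Fin (n + 2)) : N (Fin.last _) j = M (Fin.last _) j.castSucc := by
      simp [hN, hr]
    rw [expand, ih N _ _ _ minor_recurrence, Fin.prod_univ_castSucc]
    simp only [first_row, last_row, Fin.castSucc_zero, Fin.castSucc_one]
    ring

end ColumnRecurrence

section Toeplitz

variable {R : Type*}

/-- Entry of the Toeplitz matrix with first column `α` and first row `β`; the corner is read from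
`α`, as in `pascalEntry`. -/
def toeplitzEntry (α β : ℕ → R) : ℕ → ℕ → R
  | i, 0 => α i
  | 0, j + 1 => β (j + 1)
  | i + 1, j + 1 => toeplitzEntry α β i j

/-- The Toeplitz matrix of order `n + 1` with first column `α` and first row `β`. -/
def toeplitzM (α β : ℕ → R) (n : ℕ) : Matrix (Fin (n + 1)) (Fin (n + 1)) R :=
  of fun i j => toeplitzEntry α β i j

theorem toeplitzEntry_zero_right (α β : ℕ → R) (i : ℕ) : toeplitzEntry α β i 0 = α i := by
  rw [toeplitzEntry]

theorem toeplitzEntry_zero_left {α β : ℕ → R} (h : α 0 = β 0) (j : ℕ) :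
    toeplitzEntry α β 0 j = β j := by
  cases j <;> simp [toeplitzEntry, h]

theorem toeplitzEntry_succ_succ (α β : ℕ → R) (i j : ℕ) :
    toeplitzEntry α β (i + 1) (j + 1) = toeplitzEntry α β i j := by
  rw [toeplitzEntry]

variable [CommRing R] {α β : ℕ → R} {a b : R}

-- The sequence `…, α 2, α 1, α 0 = β 0, β 1, β 2, …` satisfies the recurrence except at `β 1`.
theorem toeplitzEntry_add_two (h : α 0 = β 0) (hα : ∀ i, α i = a * α (i + 1) + b * α (i + 2))
    (hβ : ∀ j, β (j + 2) = a * β (j + 1) + b * β j) (i j : ℕ) :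
    toeplitzEntry α β i (j + 2) =
      a * toeplitzEntry α β i (j + 1) + b * toeplitzEntry α β i j +
        if i = j + 1 then β 1 - a * β 0 - b * α 1 else 0 := by
  induction j generalizing i with
  | zero =>
    match i with
    | 0 => simp [toeplitzEntry_zero_left h, hβ]
    | 1 => simp [toeplitzEntry, h]
    | i + 2 => simp [toeplitzEntry, hα i]
  | succ j ih =>
    cases i with
    | zero => simp [toeplitzEntry_zero_left h, hβ]
    | succ i => simpa only [toeplitzEntry_succ_succ, Nat.add_right_cancel_iff] using ih i

theorem det_toeplitzM_succ_of_recurrence (h : α 0 = β 0)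
    (hα : ∀ i, α i = a * α (i + 1) + b * α (i + 2))
    (hβ : ∀ j, β (j + 2) = a * β (j + 1) + b * β j) (n : ℕ) :
    (toeplitzM α β (n + 1)).det =
      (a * β 0 + b * α 1 - β 1) ^ n * (α 0 * α n - β 1 * α (n + 1)) := by
  rw [det_of_col_recurrence _ (fun _ => a) (fun _ => b) fun _ => β 1 - a * β 0 - b * α 1]
  · have corners : toeplitzM α β (n + 1) 0 0 * toeplitzM α β (n + 1) (Fin.last _) 1 -
        toeplitzM α β (n + 1) 0 1 * toeplitzM α β (n + 1) (Fin.last _) 0 =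
          α 0 * α n - β 1 * α (n + 1) := by
      simp [toeplitzM, toeplitzEntry]
    rw [corners, Finset.prod_const, Finset.card_univ, Fintype.card_fin]
    ring
  · intro j
    ext i
    simp [toeplitzM, toeplitzEntry_add_two h hα hβ, Pi.single_apply, Fin.ext_iff]

end Toeplitz

theorem btrans_zero (α : ℕ → ℤ) : btrans α 0 = α 0 := by
  simp [btrans]

theorem btrans_add (α β : ℕ → ℤ) (i : ℕ) :
    btrans (fun k => α k + β k) i = btrans α i + btrans β i := by
  simp [btrans, mul_add, Finset.sum_add_distrib]

theorem btrans_succ (α : ℕ → ℤ) (i : ℕ) :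
    btrans α (i + 1) = btrans α i + btrans (fun k => α (k + 1)) i :=
  Finset.sum_choose_succ_mul (fun k _ => α k) i

-- The right-hand side satisfies Pascal's rule by `btrans_succ` in each index, because shifting both
-- indices of a Toeplitz entry does not change it.
theorem pascalEntry_btrans {α β : ℕ → ℤ} (h : α 0 = β 0) (i j : ℕ) :
    pascalEntry (btrans α) (btrans β) i j =
      btrans (fun k => btrans (toeplitzEntry α β k) j) i := by
  induction i, j using pascalEntry.induct with
  | case1 i => simp only [pascalEntry, btrans_zero, toeplitzEntry_zero_right]
  | case2 j => simp only [pascalEntry, btrans_zero, funext (toeplitzEntry_zero_left h)]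
  | case3 i j left above =>
    rw [pascalEntry, left, above]
    simp only [btrans_succ, btrans_add, toeplitzEntry_succ_succ]
    ring

theorem pascalEntry_comm {α β : ℕ → ℤ} (h : α 0 = β 0) (i j : ℕ) :
    pascalEntry α β i j = pascalEntry β α j i := by
  induction i, j using pascalEntry.induct with
  | case1 i => cases i <;> simp [pascalEntry, h]
  | case2 j => simp [pascalEntry]
  | case3 i j left above => rw [pascalEntry, left, above, pascalEntry, add_comm]

theorem pascalM_transpose {α β : ℕ → ℤ} (h : α 0 = β 0) (n : ℕ) :
    (pascalM α β n)ᵀ = pascalM β α n := by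
  ext i j
  exact pascalEntry_comm h j i

/-- The lower unitriangular matrix of binomial coefficients of order `n + 1`, which implements
`btrans` on the first `n + 1` terms. -/
def binomialM (n : ℕ) : Matrix (Fin (n + 1)) (Fin (n + 1)) ℤ :=
  of fun i k => ((i : ℕ).choose k : ℤ)

theorem det_binomialM (n : ℕ) : (binomialM n).det = 1 := by
  rw [det_of_isLowerTriangular]
  · simp [binomialM]
  · intro i k hik
    have hlt : (i : ℕ) < k := hik
    simp [binomialM, Nat.choose_eq_zero_of_lt hlt]

theorem binomialM_mulVec {n : ℕ} (α : ℕ → ℤ) (i : Fin (n + 1)) :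
    (binomialM n *ᵥ fun k => α k) i = btrans α i := by
  rw [btrans, Finset.sum_subset (Finset.range_mono i.isLt)]
  · simp [binomialM, mulVec, dotProduct, Finset.sum_range]
  · intro k _ hk
    simp [Nat.choose_eq_zero_of_lt (by simpa using hk : (i : ℕ) < k)]

theorem pascalM_btrans {α β : ℕ → ℤ} (h : α 0 = β 0) (n : ℕ) :
    pascalM (btrans α) (btrans β) n = binomialM n * (toeplitzM α β n * (binomialM n)ᵀ) := by
  have mul_transpose_apply (k j : Fin (n + 1)) :
      (toeplitzM α β n * (binomialM n)ᵀ) k j = btrans (toeplitzEntry α β k) j := by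
    simp [← binomialM_mulVec, mul_apply, mulVec, dotProduct, toeplitzM, mul_comm]
  ext i j
  rw [mul_apply]
  simp [pascalM, pascalEntry_btrans h, ← binomialM_mulVec _ i, mul_transpose_apply, mulVec,
    dotProduct]

theorem det_pascalM_btrans {α β : ℕ → ℤ} (h : α 0 = β 0) (n : ℕ) :
    (pascalM (btrans α) (btrans β) n).det = (toeplitzM α β n).det := by
  simp [pascalM_btrans h, det_binomialM]

theorem fibZ_add_two (n : ℕ) : fibZ (n + 2) = fibZ (n + 1) + fibZ n := by
  rw [fibZ]

theorem det_toeplitzM_fibZ (n : ℕ) :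
    (toeplitzM (fun i => (-1) ^ i * fibZ (i + 1)) (fun i => fibZ (i + 1)) n).det =
      fibZ (n + 2) := by
  cases n with
  | zero => simp [toeplitzM, toeplitzEntry, fibZ]
  | succ n =>
    rw [det_toeplitzM_succ_of_recurrence (a := 1) (b := 1) (by simp)]
    · have hsq : (-1 : ℤ) ^ n * (-1) ^ n = 1 := by simp [← mul_pow]
      have hone : fibZ 1 = 1 := by simp [fibZ]
      have htwo : fibZ 2 = 1 := by simp [fibZ]
      rw [fibZ_add_two (n + 1)]
      norm_num only [hone, htwo, pow_succ]
      linear_combination (fibZ (n + 1) + fibZ (n + 2)) * hsq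
    · intro i
      rw [fibZ_add_two (i + 1)]
      ring
    · intro j
      rw [fibZ_add_two (j + 1), one_mul, one_mul]

/-- For `α_i = F_{i+1}`: `det P_{(α̃)̌, α̌}(n) = F_{n+2}` and
`det P_{α̌, (α̃)̌}(n) = F_{n+2}` for every `n ≥ 0`. -/
theorem det_pascal_fib_succ (n : ℕ) :
    (pascalM (btrans fun i => (-1) ^ i * fibZ (i + 1)) (btrans fun i => fibZ (i + 1)) n).det =
      fibZ (n + 2) ∧
    (pascalM (btrans fun i => fibZ (i + 1)) (btrans fun i => (-1) ^ i * fibZ (i + 1)) n).det =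
      fibZ (n + 2) := by
  have hdet : (pascalM (btrans fun i => (-1) ^ i * fibZ (i + 1))
      (btrans fun i => fibZ (i + 1)) n).det = fibZ (n + 2) := by
    rw [det_pascalM_btrans (by simp), det_toeplitzM_fibZ]
  refine ⟨hdet, ?_⟩
  rw [← pascalM_transpose (by simp [btrans_zero]), det_transpose, hdet]
end

section
/- Let c be a complex number, φ = (1+√5)/2, Φ = (1−√5)/2, and let (a,b) = (c − φ, c − Φ) or (a,b) = (c − Φ, c − φ). Then for every positive integer n, det T_n(a,b,c) = c·F_n + F_{n−1}. -/
/-!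
Write the first row `(c, a, …, a)` as `(c - a, 0, …, 0) + a • (1, …, 1)` and expand by linearity.
The first summand leaves `(c - a) * det T_n`; in the second, subtracting `b` times the row of ones
from every other row leaves a triangular matrix. Hence
`det T_{n+1} = (c - a) * det T_n + a * (c - b) ^ n`. Eliminating the powers of `c - b` gives a
second-order recurrence with characteristic roots `c - a` and `c - b`; when these have sum `1` and
product `-1`, it is the Fibonacci recurrence.
-/

/-- `T_n(a,b,c)`: the `n × n` Toeplitz matrix with diagonal entries `c`, entries strictly
above the diagonal `a`, and entries strictly below the diagonal `b`. -/
def toeplitz3 (a b c : ℂ) (n : ℕ) : Matrix (Fin n) (Fin n) ℂ :=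
  Matrix.of fun i j => if (i : ℕ) = (j : ℕ) then c else if (i : ℕ) < (j : ℕ) then a else b

/-- The golden ratio `φ = (1 + √5)/2` as a complex number. -/
noncomputable def phiC : ℂ := (1 + (Real.sqrt 5 : ℂ)) / 2

/-- The golden ratio conjugate `Φ = (1 - √5)/2` as a complex number. -/
noncomputable def PhiC : ℂ := (1 - (Real.sqrt 5 : ℂ)) / 2

open Matrix

/-- The `n × n` Toeplitz matrix `T_n(a,b,c)` with entries in an arbitrary type: `toeplitz3` is its
complex case. -/
def threeValuedToeplitz {α : Type*} (a b c : α) (n : ℕ) : Matrix (Fin n) (Fin n) α :=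
  of fun i j => if i = j then c else if i < j then a else b

theorem toeplitz3_eq_threeValuedToeplitz (a b c : ℂ) (n : ℕ) :
    toeplitz3 a b c n = threeValuedToeplitz a b c n := by
  ext i j
  simp [toeplitz3, threeValuedToeplitz, Fin.ext_iff]

namespace threeValuedToeplitz

section Entries

variable {α : Type*} (a b c : α)

theorem apply_self {n : ℕ} (i : Fin n) : threeValuedToeplitz a b c n i i = c := by
  simp [threeValuedToeplitz]

theorem apply_of_gt {n : ℕ} {i j : Fin n} (hji : j < i) : threeValuedToeplitz a b c n i j = b := by
  simp [threeValuedToeplitz, hji.ne', hji.not_gt]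

theorem submatrix_succ_succ (n : ℕ) :
    (threeValuedToeplitz a b c (n + 1)).submatrix Fin.succ Fin.succ =
      threeValuedToeplitz a b c n := by
  ext i j
  simp [threeValuedToeplitz]

end Entries

variable {R : Type*} [CommRing R] (a b c : R)

theorem row_zero (n : ℕ) :
    threeValuedToeplitz a b c (n + 1) 0 = (c - a) • Pi.single 0 1 + a • 1 := by
  ext j
  cases j using Fin.cases <;> simp [threeValuedToeplitz, (Fin.succ_ne_zero _).symm]

theorem det_updateRow_zero_single (n : ℕ) :
    ((threeValuedToeplitz a b c (n + 1)).updateRow 0 (Pi.single 0 1)).det =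
      (threeValuedToeplitz a b c n).det := by
  rw [← adjugate_apply, adjugate_fin_succ_eq_det_submatrix]
  simp [Fin.succAbove_zero, submatrix_succ_succ]

theorem det_updateRow_zero_one (n : ℕ) :
    ((threeValuedToeplitz a b c (n + 1)).updateRow 0 1).det = (c - b) ^ n := by
  let T := threeValuedToeplitz a b c (n + 1)
  let U : Matrix (Fin (n + 1)) (Fin (n + 1)) R := (of fun i j => T i j - b).updateRow 0 1
  have hTU : (T.updateRow 0 1).det = U.det := by
    refine det_eq_of_forall_row_eq_smul_add_const (Function.update (fun _ => b) 0 0) 0 (by simp) ?_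
    intro i j
    cases i using Fin.cases <;> simp [U]
  have hU : U.IsUpperTriangular := by
    intro i j (hji : j < i)
    have hi : i ≠ 0 := Fin.ne_zero_of_lt hji
    simp [U, T, hi, apply_of_gt a b c hji]
  rw [hTU, det_of_isUpperTriangular hU, Fin.prod_univ_succ]
  simp [U, T, apply_self]

theorem det_succ (n : ℕ) :
    (threeValuedToeplitz a b c (n + 1)).det =
      (c - a) * (threeValuedToeplitz a b c n).det + a * (c - b) ^ n := by
  rw [← updateRow_eq_self (threeValuedToeplitz a b c (n + 1)) 0, row_zero, det_updateRow_add,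
    det_updateRow_smul, det_updateRow_smul, det_updateRow_zero_single, det_updateRow_zero_one]

theorem det_add_two (n : ℕ) :
    (threeValuedToeplitz a b c (n + 2)).det =
      ((c - a) + (c - b)) * (threeValuedToeplitz a b c (n + 1)).det -
        (c - a) * (c - b) * (threeValuedToeplitz a b c n).det := by
  rw [det_succ a b c (n + 1), pow_succ]
  linear_combination -(c - b) * det_succ a b c n

end threeValuedToeplitz

theorem eq_fib_nsmul_add_fib_nsmul {M : Type*} [AddCommMonoid M] {u : ℕ → M}
    (hu : ∀ n, u (n + 2) = u (n + 1) + u n) (n : ℕ) :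
    u (n + 1) = (n + 1).fib • u 1 + n.fib • u 0 := by
  induction n using Nat.twoStepInduction with
  | zero => simp
  | one => simp [hu]
  | more n ih ih_succ =>
    rw [hu, ih, ih_succ]
    simp only [Nat.fib_add_two, add_nsmul]
    abel

theorem fibZ_eq_fib (n : ℕ) : fibZ n = n.fib := by
  induction n using Nat.twoStepInduction with
  | zero => rfl
  | one => rfl
  | more n ih ih_succ =>
    rw [fibZ, ih, ih_succ, Nat.fib_add_two]
    push_cast
    ring

theorem phiC_eq_goldenRatio : phiC = Real.goldenRatio := by
  simp [phiC, Real.goldenRatio]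

theorem PhiC_eq_goldenConj : PhiC = Real.goldenConj := by
  simp [PhiC, Real.goldenConj]

theorem phiC_add_PhiC : phiC + PhiC = 1 := by
  rw [phiC_eq_goldenRatio, PhiC_eq_goldenConj]
  exact_mod_cast Real.goldenRatio_add_goldenConj

theorem phiC_mul_PhiC : phiC * PhiC = -1 := by
  rw [phiC_eq_goldenRatio, PhiC_eq_goldenConj]
  exact_mod_cast Real.goldenRatio_mul_goldenConj

theorem det_toeplitz3_golden_general {R : Type*} [CommRing R] {x y : R} (hadd : x + y = 1)
    (hmul : x * y = -1) (c : R) (n : ℕ) :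
    (threeValuedToeplitz (c - x) (c - y) c (n + 1)).det = c * (n + 1).fib + n.fib := by
  have hrec (k : ℕ) : (threeValuedToeplitz (c - x) (c - y) c (k + 2)).det =
      (threeValuedToeplitz (c - x) (c - y) c (k + 1)).det +
        (threeValuedToeplitz (c - x) (c - y) c k).det := by
    simp [threeValuedToeplitz.det_add_two, hadd, hmul]
  simpa [threeValuedToeplitz.apply_self, mul_comm] using
    eq_fib_nsmul_add_fib_nsmul (u := fun k => (threeValuedToeplitz (c - x) (c - y) c k).det) hrec n

/-- If `(a,b) = (c - φ, c - Φ)` or `(a,b) = (c - Φ, c - φ)`, then for every `n ≥ 1`,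
`det T_n(a,b,c) = c * F_n + F_{n-1}`. -/
theorem det_toeplitz3_golden (a b c : ℂ)
    (h : (a = c - phiC ∧ b = c - PhiC) ∨ (a = c - PhiC ∧ b = c - phiC)) :
    ∀ n : ℕ, 1 ≤ n →
      (toeplitz3 a b c n).det = c * (fibZ n : ℂ) + (fibZ (n - 1) : ℂ) := by
  rintro (_ | n) hn
  · contradiction
  rw [toeplitz3_eq_threeValuedToeplitz, fibZ_eq_fib, fibZ_eq_fib]
  rcases h with ⟨rfl, rfl⟩ | ⟨rfl, rfl⟩
  · exact_mod_cast det_toeplitz3_golden_general phiC_add_PhiC phiC_mul_PhiC c n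
  · exact_mod_cast det_toeplitz3_golden_general
      ((add_comm _ _).trans phiC_add_PhiC) ((mul_comm _ _).trans phiC_mul_PhiC) c n
end

section
/- Let α and β be the integer sequences α_i = 2^{i+2} − 1 and β_i = 2^i + 2 (so α_0 = β_0 = 3). Then for every n ≥ 0, det P_{α,β}(n) = J_{n+3}. -/
/-- The Jacobsthal sequence: `J 0 = 0`, `J 1 = 1`, `J n = J (n-1) + 2 * J (n-2)`. -/
def jacobsthalZ : ℕ → ℤ
  | 0 => 0
  | 1 => 1
  | n + 2 => jacobsthalZ (n + 1) + 2 * jacobsthalZ n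

/-! The recurrence `P_{i,j} = P_{i,j-1} + P_{i-1,j}` says `Δ₁ Δ₂ P = P`, where `Δ₁` and `Δ₂` are the
forward differences in the two indices. Newton's formula in both indices writes `P = L T Lᵀ` with
`L` the unitriangular matrix of binomial coefficients and `T_{i,j} = (Δ₁^i Δ₂^j P)_{0,0}`; since
`Δ₁ Δ₂ P = P`, the matrix `T` is Toeplitz, with first column `Δ^i α 0` and first row `Δ^j β 0`.
When `α` and `β` are constants plus multiples of `2^i`, `T` is constant above and below the
diagonal. The determinant of `T - t J`, with `J` the all-ones matrix, is affine in `t`, and it is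
known at the two values of `t` that make `T - t J` triangular. -/

open Matrix fwdDiff

section NewtonExpansion

theorem map_fwdDiff_iter {M G H F : Type*} [AddCommMonoid M] [AddCommGroup G] [AddCommGroup H]
    [FunLike F G H] [AddMonoidHomClass F G H] (φ : F) (h : M) (f : M → G) (n : ℕ) (y : M) :
    φ (Δ_[h] ^[n] f y) = Δ_[h] ^[n] (fun x => φ (f x)) y := by
  simp only [fwdDiff_iter_eq_sum_shift, map_sum, map_zsmul]

theorem eq_sum_fin_choose_smul_fwdDiff_iter {G : Type*} [AddCommGroup G] (f : ℕ → G) {n : ℕ}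
    (i : Fin n) : f i = ∑ k : Fin n, (i : ℕ).choose k • Δ_[1] ^[k] f 0 := by
  have newton : f i = ∑ k ∈ Finset.range (i + 1), (i : ℕ).choose k • Δ_[1] ^[k] f 0 := by
    simpa using shift_eq_sum_fwdDiff_iter 1 f i 0
  rw [newton, Fin.sum_univ_eq_sum_range (fun k => (i : ℕ).choose k • Δ_[1] ^[k] f 0)]
  refine Finset.sum_subset (Finset.range_mono i.isLt) fun k _ hk => ?_
  have hik : (i : ℕ) < k := by simpa [Nat.lt_succ_iff] using hk
  rw [Nat.choose_eq_zero_of_lt hik, zero_smul]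

/-- The lower triangular Pascal matrix, with entries `i.choose j`; it is the matrix of Newton's
forward difference expansion at `0`. -/
def chooseMatrix (R : Type*) [NatCast R] (n : ℕ) : Matrix (Fin n) (Fin n) R :=
  of fun i j => ((i : ℕ).choose j : R)

variable (R : Type*) [CommRing R] (n : ℕ)

theorem det_chooseMatrix : (chooseMatrix R n).det = 1 := by
  rw [det_of_isLowerTriangular]
  · simp [chooseMatrix]
  · intro i j hij
    have hij : (i : ℕ) < j := hij
    simp [chooseMatrix, Nat.choose_eq_zero_of_lt hij]

variable {R}

theorem of_eq_chooseMatrix_mul_fwdDiff_iter_mul_transpose (f : ℕ → ℕ → R) :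
    (of fun i j : Fin n => f i j) =
      chooseMatrix R n * (of fun i j : Fin n => Δ_[1] ^[j] (Δ_[1] ^[i] f 0) 0) *
        (chooseMatrix R n)ᵀ := by
  ext i j
  calc f i j = ∑ k : Fin n, (i : ℕ).choose k • (Δ_[1] ^[k] f 0) j := by
        conv_lhs => rw [eq_sum_fin_choose_smul_fwdDiff_iter f i]
        simp only [Finset.sum_apply, Pi.smul_apply]
    _ = ∑ k : Fin n, (i : ℕ).choose k •
          ∑ l : Fin n, (j : ℕ).choose l • Δ_[1] ^[l] (Δ_[1] ^[k] f 0) 0 := by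
        refine Finset.sum_congr rfl fun k _ => ?_
        rw [← eq_sum_fin_choose_smul_fwdDiff_iter (Δ_[1] ^[k] f 0) j]
    _ = _ := by
        rw [Matrix.mul_assoc]
        simp only [mul_apply, transpose_apply, chooseMatrix, of_apply, nsmul_eq_mul, mul_comm]

theorem det_of_eq_det_fwdDiff_iter (f : ℕ → ℕ → R) :
    (of fun i j : Fin n => f i j).det =
      (of fun i j : Fin n => Δ_[1] ^[j] (Δ_[1] ^[i] f 0) 0).det := by
  rw [of_eq_chooseMatrix_mul_fwdDiff_iter_mul_transpose, det_mul, det_mul, det_transpose,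
    det_chooseMatrix, one_mul, mul_one]

end NewtonExpansion

section Toeplitz

variable {R : Type*}

/-- The Toeplitz matrix of order `n` with first column `a` and first row `b`. The diagonal entry is
`a 0`, so `b 0` is never read. -/
def toeplitz (a b : ℕ → R) (n : ℕ) : Matrix (Fin n) (Fin n) R :=
  of fun i j => if j ≤ i then a (i - j) else b (j - i)

theorem of_eq_toeplitz {t : ℕ → ℕ → R} (ht : ∀ i j, t (i + 1) (j + 1) = t i j) (n : ℕ) :
    (of fun i j : Fin n => t i j) = toeplitz (fun i => t i 0) (t 0) n := by
  have shift (d i j : ℕ) : t (i + d) (j + d) = t i j := by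
    induction d with
    | zero => rfl
    | succ d ih => rw [← add_assoc, ← add_assoc, ht, ih]
  ext i j
  simp only [toeplitz, of_apply]
  split_ifs with hji
  · simpa [Nat.sub_add_cancel (Fin.le_def.mp hji)] using shift j (i - j) 0
  · simpa [Nat.sub_add_cancel (Fin.le_def.mp (le_of_not_ge hji))] using shift i 0 (j - i)

end Toeplitz

section PascalTriangle

variable {α β : ℕ → ℤ}

theorem pascalEntry_zero_right (i : ℕ) : pascalEntry α β i 0 = α i := by
  rw [pascalEntry]

theorem pascalEntry_zero_left (h₀ : α 0 = β 0) : pascalEntry α β 0 = β := by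
  ext j
  cases j with
  | zero => rw [pascalEntry, h₀]
  | succ j => rw [pascalEntry]

theorem fwdDiff_fwdDiff_pascalEntry (i : ℕ) :
    Δ_[1] (Δ_[1] (pascalEntry α β) i) = pascalEntry α β i := by
  ext j
  simp only [fwdDiff, Pi.sub_apply, pascalEntry]
  ring

theorem fwdDiff_fwdDiff_iter_succ_pascalEntry (i : ℕ) :
    Δ_[1] (Δ_[1] ^[i + 1] (pascalEntry α β) 0) = Δ_[1] ^[i] (pascalEntry α β) 0 :=
  calc Δ_[1] (Δ_[1] ^[i + 1] (pascalEntry α β) 0)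
    _ = Δ_[1] ^[i] (fun k => Δ_[1] (Δ_[1] (pascalEntry α β) k)) 0 :=
        map_fwdDiff_iter (fwdDiff_aux.fwdDiffₗ ℕ ℤ 1) 1 (Δ_[1] (pascalEntry α β)) i 0
    _ = Δ_[1] ^[i] (pascalEntry α β) 0 := by simp only [fwdDiff_fwdDiff_pascalEntry]

theorem det_pascalM_eq_det_toeplitz (h₀ : α 0 = β 0) (n : ℕ) :
    (pascalM α β n).det =
      (toeplitz (fun i => Δ_[1] ^[i] α 0) (fun j => Δ_[1] ^[j] β 0) (n + 1)).det := by
  have column (i : ℕ) : Δ_[1] ^[i] (pascalEntry α β) 0 0 = Δ_[1] ^[i] α 0 := by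
    simpa [pascalEntry_zero_right] using
      map_fwdDiff_iter (Pi.evalAddMonoidHom (fun _ => ℤ) 0) 1 (pascalEntry α β) i 0
  rw [pascalM, det_of_eq_det_fwdDiff_iter,
    of_eq_toeplitz (t := fun i j => Δ_[1] ^[j] (Δ_[1] ^[i] (pascalEntry α β) 0) 0)]
  · simp [column, pascalEntry_zero_left h₀]
  · intro i j
    rw [Function.iterate_succ_apply, fwdDiff_fwdDiff_iter_succ_pascalEntry]

end PascalTriangle

section ThreeValued

/-- The matrix with `b` below the diagonal, `x` on it and `a` above it. The Toeplitz matrix of a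
generalized Pascal triangle has this form when both borders are affine in `2 ^ i`. -/
def threeValued {R : Type*} (m : Type*) [LinearOrder m] (b x a : R) : Matrix m m R :=
  of fun i j => if i < j then a else if j < i then b else x

variable {R m : Type*} [CommRing R]

theorem det_add_smul_vecMulVec [Fintype m] [DecidableEq m] (A : Matrix m m R) (u v : m → R)
    (t : R) : (A + t • vecMulVec u v).det =
      A.det - t * (fromBlocks A (replicateCol Unit u) (replicateRow Unit v) 0).det := by
  set B := fromBlocks A (replicateCol Unit u) (replicateRow Unit v) 0 with hB
  -- The Schur complement moves `t` into a single row, in which the determinant is linear.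
  have bordered : (A + t • vecMulVec u v).det =
      (B.updateRow (Sum.inr ()) (-t • Sum.elim v 0 + Sum.elim (0 : m → R) 1)).det := by
    have schur : A + t • vecMulVec u v =
        A - replicateCol Unit u * replicateRow Unit (-t • v) := by
      rw [replicateRow_smul, Matrix.mul_smul, neg_smul, sub_neg_eq_add, vecMulVec_eq Unit]
    rw [schur, ← det_fromBlocks_one₂₂]
    congr 1
    ext (i | i) (j | j) <;> simp [hB]
  have row_v : B.updateRow (Sum.inr ()) (Sum.elim v 0) = B := by
    ext (i | i) (j | j) <;> simp [hB]
  have row_one : B.updateRow (Sum.inr ()) (Sum.elim (0 : m → R) 1) =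
      fromBlocks A (replicateCol Unit u) 0 1 := by
    ext (i | i) (j | j) <;> simp [hB]
  rw [bordered, det_updateRow_add, det_updateRow_smul, row_v, row_one, det_fromBlocks_zero₂₁,
    det_one]
  ring

variable [LinearOrder m]

theorem threeValued_add_smul_vecMulVec_one (b x a t : R) :
    threeValued m b x a + t • vecMulVec 1 1 = threeValued m (b + t) (x + t) (a + t) := by
  ext i j
  simp only [threeValued, Matrix.add_apply, Matrix.smul_apply, vecMulVec_apply, of_apply,
    Pi.one_apply, mul_one, smul_eq_mul]
  split_ifs <;> rfl

variable [Fintype m]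

theorem det_threeValued_zero_above (b x : R) :
    (threeValued m b x 0).det = x ^ Fintype.card m := by
  rw [det_of_isLowerTriangular]
  · simp [threeValued]
  · intro i j hij
    have hij : i < j := hij
    simp [threeValued, hij]

theorem det_threeValued_zero_below (x a : R) :
    (threeValued m 0 x a).det = x ^ Fintype.card m := by
  rw [det_of_isUpperTriangular]
  · simp [threeValued]
  · intro i j hij
    have hji : j < i := hij
    simp [threeValued, hji, hji.not_gt]

theorem sub_mul_det_threeValued (b x a : R) :
    (a - b) * (threeValued m b x a).det =
      a * (x - b) ^ Fintype.card m - b * (x - a) ^ Fintype.card m := by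
  have affine (t : R) := det_add_smul_vecMulVec (threeValued m b x a) 1 1 t
  simp only [threeValued_add_smul_vecMulVec_one] at affine
  have above := affine (-a)
  have below := affine (-b)
  rw [add_neg_cancel, det_threeValued_zero_above] at above
  rw [add_neg_cancel, det_threeValued_zero_below] at below
  linear_combination b * above - a * below

end ThreeValued

theorem fwdDiff_iter_succ_mul_two_pow_add {R : Type*} [CommRing R] (c d : R) (k : ℕ) :
    Δ_[1] ^[k + 1] (fun i : ℕ => c * 2 ^ i + d) = fun i => c * 2 ^ i := by
  have fixed : Δ_[1] (fun i : ℕ => c * 2 ^ i) = fun i => c * 2 ^ i := by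
    ext i
    simp only [fwdDiff]
    ring
  have first : Δ_[1] (fun i : ℕ => c * 2 ^ i + d) = fun i => c * 2 ^ i := by
    ext i
    simp only [fwdDiff]
    ring
  rw [Function.iterate_succ_apply, first, Function.iterate_fixed fixed]

theorem toeplitz_fwdDiff_iter_mul_two_pow_add {R : Type*} [CommRing R] (b x a : R) (n : ℕ) :
    toeplitz (fun i => Δ_[1] ^[i] (fun k : ℕ => b * 2 ^ k + (x - b)) 0)
        (fun j => Δ_[1] ^[j] (fun k : ℕ => a * 2 ^ k + (x - a)) 0) n =
      threeValued (Fin n) b x a := by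
  ext i j
  rcases lt_trichotomy i j with hij | rfl | hji
  · obtain ⟨d, hd⟩ : ∃ d, (j : ℕ) - i = d + 1 := ⟨j - i - 1, by have := Fin.lt_def.mp hij; omega⟩
    simp [toeplitz, threeValued, hij, hij.not_ge, hd, fwdDiff_iter_succ_mul_two_pow_add]
  · simp [toeplitz, threeValued]
  · obtain ⟨d, hd⟩ : ∃ d, (i : ℕ) - j = d + 1 := ⟨i - j - 1, by have := Fin.lt_def.mp hji; omega⟩
    simp [toeplitz, threeValued, hji, hji.le, hji.not_gt, hd, fwdDiff_iter_succ_mul_two_pow_add]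

theorem sub_mul_det_pascalM_mul_two_pow_add (b x a : ℤ) (n : ℕ) :
    (a - b) * (pascalM (fun i => b * 2 ^ i + (x - b)) (fun i => a * 2 ^ i + (x - a)) n).det =
      a * (x - b) ^ (n + 1) - b * (x - a) ^ (n + 1) := by
  rw [det_pascalM_eq_det_toeplitz (by ring), toeplitz_fwdDiff_iter_mul_two_pow_add,
    sub_mul_det_threeValued, Fintype.card_fin]

theorem three_mul_jacobsthalZ (n : ℕ) : 3 * jacobsthalZ n = 2 ^ n - (-1) ^ n := by
  induction n using Nat.twoStepInduction with
  | zero => simp [jacobsthalZ]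
  | one => simp [jacobsthalZ]
  | more n ih₀ ih₁ =>
    rw [jacobsthalZ]
    linear_combination ih₁ + 2 * ih₀

/-- Corollary 3.8 (2): for `α_i = 2^(i+2) - 1` and `β_i = 2^i + 2`,
`det P_{α,β}(n) = J_{n+3}` for every `n ≥ 0`. -/
theorem det_pascal_jacobsthal_succ (n : ℕ) :
    (pascalM (fun i => 2 ^ (i + 2) - 1) (fun i => 2 ^ i + 2) n).det =
      jacobsthalZ (n + 3) := by
  have column : (fun i => 2 ^ (i + 2) - 1 : ℕ → ℤ) = fun i => 4 * 2 ^ i + (3 - 4) := by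
    ext i
    ring
  have row : (fun i => 2 ^ i + 2 : ℕ → ℤ) = fun i => 1 * 2 ^ i + (3 - 1) := by
    ext i
    ring
  have det_eq := sub_mul_det_pascalM_mul_two_pow_add 4 3 1 n
  rw [← column, ← row] at det_eq
  refine mul_left_cancel₀ (three_ne_zero' ℤ) ?_
  linear_combination -det_eq - three_mul_jacobsthalZ (n + 3)
end
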